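/- Let n ≥ 1. For integers m ≥ 1 define g_m^b(j) = Z_m^{{(j,j), b_m}}/Z_m ∈ ℚ for 0 ≤ j ≤ 2m−1, g_m(i,j) = Z_m^{{(i,i),(j,j)}}/Z_m for 0 ≤ i < j ≤ 2m−1, and the signed extension ĝ_m(i,j) = g_m(i,j) if i < j, ĝ_m(i,i) = 0, and ĝ_m(i,j) = −g_m(j,i) if i > j. Then g_n^b(0) = 1, g_n^b(1) = Z_{n−1}/Z_n, and for every integer 2 ≤ j ≤ 2n−1: g_n^b(j) = (Z_{n−1}/Z_n)·(1 − g_{n−1}^b(j−2) + Σ_{r=0}^{n−1} (−1)^r · binom(n+1, r+2) · ĝ_{n−1}(r, j−2)). -/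

import Mathlib

open Finset

/-- Membership predicate for the vertex set `V_n` of the TSSCPP graph `G_n`:
`0 ≤ x₁ ≤ 2n`, `x₁ ≤ x₂ ≤ 2n+1`, with `(2n,2n+1)` removed when `n` is odd. -/
def memV (n : ℕ) (x : ℤ × ℤ) : Prop :=
  0 ≤ x.1 ∧ x.1 ≤ 2*(n:ℤ) ∧ x.1 ≤ x.2 ∧ x.2 ≤ 2*(n:ℤ)+1 ∧
    ¬(n % 2 = 1 ∧ x.1 = 2*(n:ℤ) ∧ x.2 = 2*(n:ℤ)+1)

instance memV.decPred (n : ℕ) : DecidablePred (memV n) := fun x => by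
  unfold memV; infer_instance

/-- The vertex set `V_n` as a finite set. -/
noncomputable def Vfin (n : ℕ) : Finset (ℤ × ℤ) :=
  (Finset.Icc (0:ℤ) (2*(n:ℤ)) ×ˢ Finset.Icc (0:ℤ) (2*(n:ℤ)+1)).filter (memV n)

/-- The vertex set `V_n` as a set. -/
def Vset (n : ℕ) : Set (ℤ × ℤ) := {x | memV n x}

/-- The distinguished vertex `b_n = (2n, 2n+1-(n mod 2))`. -/
def bvertex (n : ℕ) : ℤ × ℤ := (2*(n:ℤ), 2*(n:ℤ)+1 - ((n % 2 : ℕ) : ℤ))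

/-- Edge relation (with `x` the "lower-left" endpoint) of the TSSCPP graph `G_n`:
horizontal edges `((x₁,x₂),(x₁+1,x₂))` for `0 ≤ x₁ ≤ 2n−1`, `x₁ ≤ x₂ ≤ 2n+1`, `x₁+x₂` odd;
vertical edges `((x₁,x₂),(x₁,x₂+1))` for `0 ≤ x₁ ≤ 2n` (`2n−1` when `n` odd), `x₁ ≤ x₂ ≤ 2n`;
diagonal edges `((x₁,x₁),(x₁+1,x₁+1))` for `0 ≤ x₁ ≤ 2n−1`. -/
def edgeRel (n : ℕ) (x y : ℤ × ℤ) : Prop :=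
  (y.1 = x.1 + 1 ∧ y.2 = x.2 ∧ 0 ≤ x.1 ∧ x.1 ≤ 2*(n:ℤ) - 1 ∧ x.1 ≤ x.2 ∧
      x.2 ≤ 2*(n:ℤ)+1 ∧ Odd (x.1 + x.2)) ∨
  (y.1 = x.1 ∧ y.2 = x.2 + 1 ∧ 0 ≤ x.1 ∧ x.1 ≤ 2*(n:ℤ) - ((n % 2 : ℕ) : ℤ) ∧
      x.1 ≤ x.2 ∧ x.2 ≤ 2*(n:ℤ)) ∨
  (x.1 = x.2 ∧ y.1 = x.1 + 1 ∧ y.2 = x.2 + 1 ∧ 0 ≤ x.1 ∧ x.1 ≤ 2*(n:ℤ) - 1)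

/-- The TSSCPP graph `G_n` (as a graph on all of `ℤ × ℤ`; all of its edges join
vertices of `V_n`). -/
def Gph (n : ℕ) : SimpleGraph (ℤ × ℤ) where
  Adj x y := edgeRel n x y ∨ edgeRel n y x
  symm := ⟨fun x y h => Or.symm h⟩
  loopless := by
    constructor
    rintro ⟨x1, x2⟩ (h | h) <;>
      rcases h with ⟨h1, h2, -⟩ | ⟨h1, h2, -⟩ | ⟨h0, h1, h2, -⟩ <;> omega

/-- `Zpm n U` = number of perfect matchings of the subgraph of `G_n` induced on `V_n \ U`. -/
noncomputable def Zpm (n : ℕ) (U : Set (ℤ × ℤ)) : ℕ :=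
  Nat.card {M : ((Gph n).induce (Vset n \ U)).Subgraph // M.IsPerfectMatching}

/-- `g_m^b(j) = Z_m^{{(j,j), b_m}} / Z_m`. -/
noncomputable def gb (m j : ℕ) : ℚ :=
  (Zpm m {((j:ℤ), (j:ℤ)), bvertex m} : ℚ) / (Zpm m ∅ : ℚ)

/-- `g_m(i,j) = Z_m^{{(i,i),(j,j)}} / Z_m`. -/
noncomputable def gfn (m i j : ℕ) : ℚ :=
  (Zpm m {((i:ℤ), (i:ℤ)), ((j:ℤ), (j:ℤ))} : ℚ) / (Zpm m ∅ : ℚ)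

/-- The signed extension `ĝ_m(i,j)`: `g_m(i,j)` for `i < j`, `0` on the diagonal, and
`−g_m(j,i)` for `i > j`. -/
noncomputable def ghat (m i j : ℕ) : ℚ :=
  if i < j then gfn m i j else if j < i then -gfn m j i else 0

/-!
Sweep the columns of `G_n` from right to left. A vertex with odd coordinate sum is matched upwards,
downwards or to the right, which is one step of a lattice path, so each vertex with even coordinate
sum carries the vector of numbers of lattice paths from it to the sinks, and the matchings of the
swept part with some frontier vertices deleted are counted by a linear form on the exterior product
of their vectors. Sweeping over a diagonal edge multiplies by `1 + v_{a+1} v_a`, where `v_a` is the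
vector of the diagonal vertex in column `a`, and the parity condition at `b_n` amounts to a factor
`1 + v_0`.

Contraction with the lowest sink, at which all `v_a` have coordinate `1`, shows that multiplication
by `v_{2n} v_a` has the effect of `1 - v_a`. Contraction with the highest sink of `G_{m+1}` turns
its form into that of `G_m`, multiplied by `(m+2) v_{2m+1} - v_{2m+2} + v_{2m}`. The binomial sum
arises because the `(m+2)`-nd finite difference of `a ↦ v_a` vanishes at `a = m`, which replaces the
first two terms by `∑ r, (-1)^r (m+2 choose r+2) v_{2m-r}`.
-/

/-! ### Perfect matchings as involutions -/

/-- `f` pairs up the vertices of `S` along edges of `G` and fixes every other vertex. Perfect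
matchings of `G.induce S` are encoded as such involutions of the ambient type, which makes
removing and adding vertices painless. -/
def IsPairing {α : Type*} (G : SimpleGraph α) (S : Set α) (f : α → α) : Prop :=
  (∀ x ∈ S, f x ∈ S ∧ G.Adj x (f x) ∧ f (f x) = x) ∧ ∀ x ∉ S, f x = x

/-- The number of perfect matchings of `G` on the vertex set `S`, counted as pairings. -/
noncomputable def pairingCount {α : Type*} (G : SimpleGraph α) (S : Set α) : ℕ :=
  Nat.card {f : α → α // IsPairing G S f}

section Pairing

variable {α : Type*} {G : SimpleGraph α} {S : Set α} {f : α → α} {u v w : α}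

namespace IsPairing

/-- The subgraph formed by the edges of a pairing. -/
def toSubgraph (hf : IsPairing G S f) : (G.induce S).Subgraph where
  verts := Set.univ
  Adj x y := f x = y
  adj_sub {x y} h := by
    have hadj := (hf.1 x x.2).2.1
    rwa [h] at hadj
  edge_vert _ := Set.mem_univ _
  symm := ⟨fun x y h => by rw [← h, (hf.1 x x.2).2.2]⟩

theorem isPerfectMatching_toSubgraph (hf : IsPairing G S f) :
    hf.toSubgraph.IsPerfectMatching :=
  SimpleGraph.Subgraph.isPerfectMatching_iff.2 fun x =>
    ⟨⟨f x, (hf.1 x x.2).1⟩, rfl, fun _ h => Subtype.ext (Eq.symm h)⟩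

theorem eq_of_toSubgraph_eq {g : α → α} (hf : IsPairing G S f) (hg : IsPairing G S g)
    (h : hf.toSubgraph = hg.toSubgraph) : f = g := by
  funext x
  by_cases hx : x ∈ S
  · have hadj : hf.toSubgraph.Adj ⟨x, hx⟩ ⟨f x, (hf.1 x hx).1⟩ := rfl
    rw [h] at hadj
    exact Eq.symm hadj
  · rw [hf.2 x hx, hg.2 x hx]

theorem exists_toSubgraph_eq {M : (G.induce S).Subgraph} (hM : M.IsPerfectMatching) :
    ∃ (f : α → α) (hf : IsPairing G S f), hf.toSubgraph = M := by
  choose g hadj hg using SimpleGraph.Subgraph.isPerfectMatching_iff.1 hM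
  let f := Function.extend Subtype.val (Subtype.val ∘ g) id
  have hfS (x : S) : f x = g x := Subtype.val_injective.extend_apply _ _ x
  have hf : IsPairing G S f := by
    refine ⟨fun x hx => ?_, fun x hx => Function.extend_apply' _ _ _ (by simpa using hx)⟩
    lift x to S using hx
    rw [hfS, hfS, ← hg _ _ (hadj x).symm]
    exact ⟨(g x).2, M.adj_sub (hadj x), rfl⟩
  refine ⟨f, hf, SimpleGraph.Subgraph.ext
    (SimpleGraph.Subgraph.isSpanning_iff.1 hM.2).symm ?_⟩
  ext x y
  change f x = y ↔ M.Adj x y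
  rw [hfS, Subtype.coe_inj]
  exact ⟨fun h => h ▸ hadj x, fun h => (hg x y h).symm⟩

end IsPairing

theorem card_isPerfectMatching_induce (G : SimpleGraph α) (S : Set α) :
    Nat.card {M : (G.induce S).Subgraph // M.IsPerfectMatching} = pairingCount G S := by
  refine (Nat.card_congr (Equiv.ofBijective
    (fun f : {f // IsPairing G S f} => ⟨f.2.toSubgraph, f.2.isPerfectMatching_toSubgraph⟩)
    ⟨fun f g h => Subtype.ext (f.2.eq_of_toSubgraph_eq g.2 (congrArg Subtype.val h)), ?_⟩)).symm
  rintro ⟨M, hM⟩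
  obtain ⟨f, hf, rfl⟩ := IsPairing.exists_toSubgraph_eq hM
  exact ⟨⟨f, hf⟩, rfl⟩

theorem finite_isPairing (G : SimpleGraph α) (hS : S.Finite) :
    Finite {f : α → α // IsPairing G S f} := by
  have := hS.to_subtype
  refine Finite.of_injective (β := S → S) (fun f x => ⟨f.1 x, (f.2.1 x x.2).1⟩) ?_
  rintro ⟨f, hf⟩ ⟨g, hg⟩ h
  refine Subtype.ext (funext fun x => ?_)
  by_cases hx : x ∈ S
  · exact congrArg Subtype.val (congrFun h ⟨x, hx⟩)
  · exact (hf.2 x hx).trans (hg.2 x hx).symm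

theorem pairingCount_empty (G : SimpleGraph α) : pairingCount G ∅ = 1 := by
  have : Unique {f : α → α // IsPairing G ∅ f} :=
    { default := ⟨id, by simp [IsPairing]⟩
      uniq := fun f => Subtype.ext (funext fun x => f.2.2 x (by simp)) }
  exact Nat.card_unique

theorem pairingCount_eq_zero_of_odd_ncard (G : SimpleGraph α) (hS : Odd S.ncard) :
    pairingCount G S = 0 := by
  have := (Set.finite_of_ncard_ne_zero hS.pos.ne').fintype
  have : IsEmpty {M : (G.induce S).Subgraph // M.IsPerfectMatching} := by
    refine ⟨fun M => Nat.not_even_iff_odd.2 hS ?_⟩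
    rw [← Nat.card_coe_set_eq, Nat.card_eq_fintype_card]
    exact M.2.even_card
  rw [← card_isPerfectMatching_induce, Nat.card_of_isEmpty]

theorem pairingCount_add_pairingCount_sdiff_singleton (G : SimpleGraph α) (hS : S.Finite)
    (hv : v ∈ S) [Decidable (Even S.ncard)] :
    pairingCount G S + pairingCount G (S \ {v}) =
      if Even S.ncard then pairingCount G S else pairingCount G (S \ {v}) := by
  have hcard := Set.ncard_sdiff_singleton_add_one hv hS
  split_ifs with heven
  · rw [← hcard, Nat.even_add_one, Nat.not_even_iff_odd] at heven
    rw [pairingCount_eq_zero_of_odd_ncard G heven, add_zero]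
  · rw [pairingCount_eq_zero_of_odd_ncard G (Nat.not_even_iff_odd.1 heven), zero_add]

theorem isPairing_comp_swap_iff [DecidableEq α] (hv : v ∉ S) (hw : w ∈ S) (hvw : G.Adj v w) :
    IsPairing G (S \ {w}) (f ∘ Equiv.swap v w) ↔ IsPairing G (insert v S) f ∧ f v = w := by
  have hwv := hvw.symm
  simp only [IsPairing, Set.mem_sdiff, Set.mem_singleton_iff, Set.mem_insert_iff,
    Function.comp_apply, Equiv.swap_apply_def]
  constructor
  · rintro ⟨h₁, h₂⟩
    have hfv := h₂ w (by simp)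
    have hfw := h₂ v (by simp [hv])
    grind
  · rintro ⟨⟨h₁, h₂⟩, hfv⟩
    have hfw := (h₁ v (.inl rfl)).2.2
    constructor <;> intro x hx
    · have := h₁ x
      have := h₁ (f x)
      grind
    · grind

theorem pairingCount_insert (hS : S.Finite) (hv : v ∉ S) (N : Finset α)
    (hN : ∀ w, w ∈ N ↔ w ∈ S ∧ G.Adj v w) :
    pairingCount G (insert v S) = ∑ w ∈ N, pairingCount G (S \ {w}) := by
  classical
  have := finite_isPairing G (hS.insert v)
  have mem_N (f : {f // IsPairing G (insert v S) f}) : f.1 v ∈ N := by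
    obtain ⟨hmem, hadj, -⟩ := f.2.1 v (Set.mem_insert v S)
    exact (hN _).2 ⟨Set.mem_of_mem_insert_of_ne hmem hadj.ne', hadj⟩
  have card_fiber (w : N) : pairingCount G (S \ {w.1}) =
      Nat.card {f : {f // IsPairing G (insert v S) f} // (⟨f.1 v, mem_N f⟩ : N) = w} := by
    obtain ⟨hwS, hvw⟩ := (hN w).1 w.2
    refine (Nat.card_congr (((Equiv.subtypeEquivRight fun f => ?_).trans
      (Equiv.subtypeSubtypeEquivSubtypeInter _ (fun f => f v = w.1))).trans
      (((Equiv.swap v w.1).arrowCongr (Equiv.refl α)).subtypeEquiv fun f => ?_))).symm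
    · exact Subtype.ext_iff
    · exact (isPairing_comp_swap_iff hv hwS hvw).symm
  rw [← Finset.sum_coe_sort, pairingCount,
    ← Nat.card_congr (Equiv.sigmaFiberEquiv fun f => (⟨f.1 v, mem_N f⟩ : N)), Nat.card_sigma]
  exact Finset.sum_congr rfl fun w _ => (card_fiber w).symm

theorem pairingCount_insert_of_adj_iff_eq (hS : S.Finite) (hv : v ∉ S) (hu : u ∈ S)
    (h : ∀ w ∈ S, G.Adj v w ↔ w = u) :
    pairingCount G (insert v S) = pairingCount G (S \ {u}) := by
  rw [pairingCount_insert hS hv {u} (by grind), Finset.sum_singleton]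

theorem pairingCount_insert_of_adj_iff_or [DecidablePred (· ∈ S)] (hS : S.Finite) (hv : v ∉ S)
    (huw : u ≠ w) (h : ∀ y ∈ S, G.Adj v y ↔ y = u ∨ y = w) :
    pairingCount G (insert v S) = (if u ∈ S then pairingCount G (S \ {u}) else 0) +
      if w ∈ S then pairingCount G (S \ {w}) else 0 := by
  classical
  rw [pairingCount_insert hS hv (({u, w} : Finset α).filter (· ∈ S)) (by grind),
    Finset.sum_filter, Finset.sum_pair huw]

theorem pairingCount_insert_of_forall_not_adj (hS : S.Finite) (hv : v ∉ S)
    (h : ∀ w ∈ S, ¬ G.Adj v w) : pairingCount G (insert v S) = 0 := by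
  rw [pairingCount_insert hS hv ∅ (by grind), Finset.sum_empty]

end Pairing

/-! ### Matchings counted by a linear form on an exterior algebra -/

open ExteriorAlgebra (ι)

section Wedge

variable {R M α : Type*} [CommRing R] [AddCommGroup M] [Module R M]

theorem ι_mul_ι_eq_neg (y z : M) : ι R y * ι R z = -(ι R z * ι R y) :=
  eq_neg_of_add_eq_zero_left (ExteriorAlgebra.ι_add_mul_swap y z)

theorem commute_ι_mul_ι (y z : M) (w : ExteriorAlgebra R M) : Commute (ι R y * ι R z) w := by
  induction w using ExteriorAlgebra.induction with
  | algebraMap r => exact (Algebra.commutes r _).symm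
  | ι v =>
    calc ι R y * ι R z * ι R v = -(ι R y * ι R v) * ι R z := by
          rw [mul_assoc, ι_mul_ι_eq_neg z v, mul_neg, neg_mul, mul_assoc]
      _ = ι R v * (ι R y * ι R z) := by rw [ι_mul_ι_eq_neg y v, neg_neg, mul_assoc]
  | mul a b ha hb => exact ha.mul_right hb
  | add a b ha hb => exact ha.add_right hb

theorem ι_mul_ι_mul_cancel_left (y : M) (w : ExteriorAlgebra R M) : ι R y * (ι R y * w) = 0 := by
  rw [← mul_assoc, ExteriorAlgebra.ι_sq_zero, zero_mul]

/-- The exterior product of the vectors attached by `x` to the entries of a list. -/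
noncomputable def wedge (R : Type*) {M α : Type*} [CommRing R] [AddCommGroup M] [Module R M]
    (x : α → M) (T : List α) : ExteriorAlgebra R M :=
  (T.map fun v => ι R (x v)).prod

variable (x : α → M) {T : List α}

@[simp]
theorem wedge_nil : wedge R x [] = 1 := rfl

@[simp]
theorem wedge_cons (v : α) (T : List α) : wedge R x (v :: T) = ι R (x v) * wedge R x T :=
  List.prod_cons

@[simp]
theorem wedge_append (T₁ T₂ : List α) :
    wedge R x (T₁ ++ T₂) = wedge R x T₁ * wedge R x T₂ := by
  rw [wedge, List.map_append, List.prod_append, wedge, wedge]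

theorem wedge_eq_zero_of_not_nodup (hT : ¬ T.Nodup) : wedge R x T = 0 := by
  rw [wedge, ← List.ofFn_getElem_eq_map, ← ExteriorAlgebra.ιMulti_apply]
  refine ExteriorAlgebra.ιMulti_eq_zero_of_not_inj fun hinj => hT ?_
  exact List.nodup_iff_injective_get.2 (hinj.of_comp (f := x) (g := T.get))

end Wedge

/-- The perfect matchings of `G` on `S`, with an arbitrary part of the frontier `F` deleted, are
counted by `f`: deleting the sublist `T` of `F` leaves `f (wedge R x T)` of them. -/
structure CountedBy {R M α : Type*} [CommRing R] [AddCommGroup M] [Module R M]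
    (G : SimpleGraph α) (x : α → M) (S : Set α) (F : List α)
    (f : ExteriorAlgebra R M →ₗ[R] R) : Prop where
  finite : S.Finite
  mem : ∀ v ∈ F, v ∈ S
  nodup : F.Nodup
  count : ∀ T, T.Sublist F → (pairingCount G (S \ {v | v ∈ T}) : R) = f (wedge R x T)

theorem sublist_of_sublist_cons {α : Type*} {T F : List α} {v : α} (h : T.Sublist (v :: F))
    (hv : v ∉ T) : T.Sublist F :=
  (List.sublist_cons_iff.1 h).resolve_right (by rintro ⟨L, rfl, -⟩; simp at hv)

theorem sublist_of_sublist_concat {α : Type*} {T F : List α} {v : α}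
    (h : T.Sublist (F ++ [v])) (hv : v ∉ T) : T.Sublist F := by
  rw [← List.reverse_sublist] at h ⊢
  exact sublist_of_sublist_cons (by simpa using h) (by simpa using hv)

namespace CountedBy

variable {R M α : Type*} [CommRing R] [AddCommGroup M] [Module R M] {G : SimpleGraph α}
  {x : α → M} {S : Set α} {F F₁ F₂ T₁ T₂ : List α} {f : ExteriorAlgebra R M →ₗ[R] R} {a o u d w : α}

theorem mono (h : CountedBy G x S F f) (hF : F₁.Sublist F) : CountedBy G x S F₁ f where
  finite := h.finite
  mem v hv := h.mem v (hF.subset hv)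
  nodup := h.nodup.sublist hF
  count T hT := h.count T (hT.trans hF)

theorem singleton (hf : f 1 = 0) (hfa : f (ι R (x a)) = 1) : CountedBy G x {a} [a] f where
  finite := Set.finite_singleton a
  mem := by simp
  nodup := List.nodup_singleton a
  count T hT := by
    rcases List.sublist_singleton.1 hT with rfl | rfl
    · simp [hf, pairingCount_eq_zero_of_odd_ncard G (S := {a}) (by simp)]
    · simp [hfa, pairingCount_empty]

theorem cons_isolated (h : CountedBy G x S F f) {g : ExteriorAlgebra R M →ₗ[R] R} (ha : a ∉ S)
    (haS : ∀ w ∈ S, ¬ G.Adj a w) (hg : ∀ T, T.Sublist F → g (wedge R x T) = 0)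
    (hga : ∀ T, T.Sublist F → g (ι R (x a) * wedge R x T) = f (wedge R x T)) :
    CountedBy G x (insert a S) (a :: F) g where
  finite := h.finite.insert a
  mem := by simpa using fun v hv => .inr (h.mem v hv)
  nodup := List.nodup_cons.2 ⟨fun haF => ha (h.mem a haF), h.nodup⟩
  count L hL := by
    rcases List.sublist_cons_iff.1 hL with hT | ⟨T, rfl, hT⟩
    · have haT : a ∉ L := fun haT => ha (h.mem a (hT.subset haT))
      rw [Set.insert_sdiff_of_notMem _ (by exact haT), hg L hT,
        pairingCount_insert_of_forall_not_adj h.finite.sdiff (by simp [ha])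
          fun w hw => haS w hw.1, Nat.cast_zero]
    · have hset : insert a S \ {v | v ∈ a :: T} = S \ {v | v ∈ T} := by
        ext v
        simp only [Set.mem_sdiff, Set.mem_insert_iff, Set.mem_ofPred_eq, List.mem_cons]
        grind
      rw [hset, wedge_cons, hga T hT, h.count T hT]

theorem cons_pendant (h : CountedBy G x S (d :: F) f) (ha : a ∉ S) (ho : o ∉ S) (hao : G.Adj a o)
    (haS : ∀ w ∈ S, ¬ G.Adj a w) (hoS : ∀ w ∈ S, G.Adj o w ↔ w = d) (hx : x a = x d) :
    CountedBy G x (insert a (insert o S)) (a :: F) f where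
  finite := (h.finite.insert o).insert a
  mem := by simpa using fun v hv => .inr (.inr (h.mem v (by simp [hv])))
  nodup := List.nodup_cons.2 ⟨fun haF => ha (h.mem a (by simp [haF])), h.nodup.of_cons⟩
  count L hL := by
    have hdF : d ∉ F := (List.nodup_cons.1 h.nodup).1
    have hdS : d ∈ S := h.mem d (by simp)
    have hFS : ∀ v ∈ F, v ∈ S := fun v hv => h.mem v (by simp [hv])
    have hne := hao.ne
    rcases List.sublist_cons_iff.1 hL with hT | ⟨T, rfl, hT⟩
    · have hset : insert a (insert o S) \ {v | v ∈ L} =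
          insert a (insert o (S \ {v | v ∈ L})) := by
        ext v
        have := hT.subset
        simp only [Set.mem_sdiff, Set.mem_insert_iff, Set.mem_ofPred_eq]
        grind
      rw [hset, pairingCount_insert_of_adj_iff_eq (u := o) (h.finite.sdiff.insert o)
        (by simp [ha, hne]) (by simp) (by grind)]
      rw [Set.insert_sdiff_self_of_notMem (by simp [ho]), h.count L (hT.trans (by simp))]
    · have hset : insert a (insert o S) \ {v | v ∈ a :: T} = insert o (S \ {v | v ∈ T}) := by
        ext v
        have := hT.subset
        simp only [Set.mem_sdiff, Set.mem_insert_iff, Set.mem_ofPred_eq, List.mem_cons]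
        grind
      rw [hset, pairingCount_insert_of_adj_iff_eq (u := d) h.finite.sdiff (by simp [ho])
        ⟨hdS, fun hdT => hdF (hT.subset hdT)⟩ (fun w hw => hoS w hw.1), wedge_cons, hx,
        ← wedge_cons, ← h.count (d :: T) (hT.cons_cons d)]
      congr 2
      ext v
      simp only [Set.mem_sdiff, Set.mem_singleton_iff, Set.mem_ofPred_eq, List.mem_cons]
      grind

theorem count_ite [DecidablePred (· ∈ S \ {v | v ∈ T₁ ++ T₂})] (h : CountedBy G x S F f)
    (hw : w ∈ S) (hT : w ∉ T₁ ++ T₂ → (T₁ ++ w :: T₂).Sublist F) :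
    ((if w ∈ S \ {v | v ∈ T₁ ++ T₂} then
      pairingCount G ((S \ {v | v ∈ T₁ ++ T₂}) \ {w}) else 0 : ℕ) : R) =
        f (wedge R x (T₁ ++ w :: T₂)) := by
  by_cases hwT : w ∈ T₁ ++ T₂
  · have hdup : ¬ (T₁ ++ w :: T₂).Nodup := fun hnd =>
      (List.nodup_cons.1 (List.nodup_middle.1 hnd)).1 hwT
    rw [if_neg fun hw => hw.2 hwT, wedge_eq_zero_of_not_nodup x hdup, map_zero, Nat.cast_zero]
  · rw [if_pos ⟨hw, hwT⟩, ← h.count _ (hT hwT)]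
    congr 2
    ext v
    simp only [Set.mem_sdiff, Set.mem_singleton_iff, Set.mem_ofPred_eq, List.mem_append,
      List.mem_cons]
    grind

theorem count_insert_of_adj_iff_or (h : CountedBy G x S (F₁ ++ u :: d :: F₂) f) (ho : o ∉ S)
    (hoS : ∀ w ∈ S, G.Adj o w ↔ w = u ∨ w = d) (hx : x a = x u + x d)
    (hT₁ : T₁.Sublist (F₁ ++ [u])) (hT₂ : T₂.Sublist (d :: F₂)) :
    (pairingCount G (insert o (S \ {v | v ∈ T₁ ++ T₂})) : R) = f (wedge R x (T₁ ++ a :: T₂)) := by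
  classical
  have hud : u ≠ d := by
    rintro rfl
    simpa using (List.nodup_append.1 h.nodup).2.1
  have hu (hu : u ∉ T₁ ++ T₂) : (T₁ ++ u :: T₂).Sublist (F₁ ++ u :: d :: F₂) :=
    (sublist_of_sublist_concat hT₁ (by grind)).append (hT₂.cons_cons u)
  have hd (hd : d ∉ T₁ ++ T₂) : (T₁ ++ d :: T₂).Sublist (F₁ ++ u :: d :: F₂) := by
    simpa using hT₁.append ((sublist_of_sublist_cons hT₂ (by grind)).cons_cons d)
  rw [pairingCount_insert_of_adj_iff_or h.finite.sdiff (by simp [ho]) hud fun w hw => hoS w hw.1,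
    Nat.cast_add, h.count_ite (h.mem u (by simp)) hu, h.count_ite (h.mem d (by simp)) hd]
  simp only [wedge_append, wedge_cons, hx, map_add, add_mul, mul_add]

theorem insert_middle (h : CountedBy G x S (F₁ ++ u :: d :: F₂) f)
    {g : ExteriorAlgebra R M →ₗ[R] R} (ha : a ∉ S) (ho : o ∉ S) (hao : G.Adj a o)
    (hoS : ∀ w ∈ S, G.Adj o w ↔ w = u ∨ w = d) (hx : x a = x u + x d)
    (hg : ∀ T₁ T₂, g (wedge R x (T₁ ++ a :: T₂)) = f (wedge R x (T₁ ++ a :: T₂)))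
    (hcount : ∀ T₁ T₂, T₁.Sublist (F₁ ++ [u]) → T₂.Sublist (d :: F₂) →
      (pairingCount G (insert a (insert o (S \ {v | v ∈ T₁ ++ T₂}))) : R) =
        g (wedge R x (T₁ ++ T₂))) :
    CountedBy G x (insert a (insert o S)) (F₁ ++ u :: a :: d :: F₂) g where
  finite := (h.finite.insert o).insert a
  mem v hv := by
    have := h.mem v
    grind
  nodup := by
    have haF : a ∉ F₁ ++ u :: d :: F₂ := fun haF => ha (h.mem a haF)
    have hnodup := h.nodup
    grind
  count T hT := by
    have hFS := h.mem
    have hne := hao.ne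
    rw [List.append_cons, List.sublist_append_iff] at hT
    obtain ⟨T₁, L, rfl, hT₁, hL⟩ := hT
    have hT₁S : ∀ v ∈ T₁, v ∈ S := fun v hv => h.mem v (by have := hT₁.subset hv; grind)
    have hdFS : ∀ T₂ : List α, T₂.Sublist (d :: F₂) → ∀ v ∈ T₂, v ∈ S := fun T₂ hT₂ v hv =>
      h.mem v (by have := hT₂.subset hv; grind)
    rcases List.sublist_cons_iff.1 hL with hL | ⟨T₂, rfl, hT₂⟩
    · have := hdFS L hL
      rw [← hcount T₁ L hT₁ hL]
      congr 2
      ext v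
      simp only [Set.mem_sdiff, Set.mem_insert_iff, Set.mem_ofPred_eq, List.mem_append]
      grind
    · have := hdFS T₂ hT₂
      rw [hg, ← h.count_insert_of_adj_iff_or ho hoS hx hT₁ hT₂]
      congr 2
      ext v
      simp only [Set.mem_sdiff, Set.mem_insert_iff, Set.mem_ofPred_eq, List.mem_append,
        List.mem_cons]
      grind

theorem insert_middle_of_forall_not_adj (h : CountedBy G x S (F₁ ++ u :: d :: F₂) f) (ha : a ∉ S)
    (ho : o ∉ S) (hao : G.Adj a o) (haS : ∀ w ∈ S, ¬ G.Adj a w)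
    (hoS : ∀ w ∈ S, G.Adj o w ↔ w = u ∨ w = d) (hx : x a = x u + x d) :
    CountedBy G x (insert a (insert o S)) (F₁ ++ u :: a :: d :: F₂) f := by
  refine h.insert_middle ha ho hao hoS hx (fun _ _ => rfl) fun T₁ T₂ hT₁ hT₂ => ?_
  have hne := hao.ne
  rw [pairingCount_insert_of_adj_iff_eq (u := o) (h.finite.sdiff.insert o)
    (by simp [ha, hne]) (by simp) (by grind),
    Set.insert_sdiff_self_of_notMem (by simp [ho]), h.count _ (by simpa using hT₁.append hT₂)]

theorem count_insert_sdiff_ite [DecidablePred (· ∈ insert o (S \ {v | v ∈ T₁ ++ T₂}))]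
    (h : CountedBy G x S (F₁ ++ u :: d :: F₂) f) (ho : o ∉ S)
    (hoS : ∀ w ∈ S, G.Adj o w ↔ w = u ∨ w = d)
    (hT₁ : T₁.Sublist (F₁ ++ [u])) (hT₂ : T₂.Sublist (d :: F₂)) :
    ((if d ∈ insert o (S \ {v | v ∈ T₁ ++ T₂}) then
      pairingCount G (insert o (S \ {v | v ∈ T₁ ++ T₂}) \ {d}) else 0 : ℕ) : R) =
        f (wedge R x (T₁ ++ u :: d :: T₂)) := by
  have hu : u ∈ S := h.mem u (by simp)
  have hd : d ∈ S := h.mem d (by simp)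
  have hod : o ≠ d := fun hod => ho (hod ▸ hd)
  have hmem (hnodup : (T₁ ++ u :: d :: T₂).Nodup) : u ∉ T₁ ++ T₂ ∧ d ∉ T₁ ++ T₂ := by
    simp only [List.nodup_append, List.nodup_cons, List.mem_cons, List.mem_append] at hnodup ⊢
    grind
  by_cases hdT : d ∈ T₁ ++ T₂
  · rw [if_neg (by grind), wedge_eq_zero_of_not_nodup x fun h => (hmem h).2 hdT,
      map_zero, Nat.cast_zero]
  rw [if_pos (.inr ⟨hd, hdT⟩), Set.insert_sdiff_of_notMem _ (by simpa using hod)]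
  by_cases huT : u ∈ T₁ ++ T₂
  · rw [pairingCount_insert_of_forall_not_adj h.finite.sdiff.sdiff (by simp [ho])
      (by grind), wedge_eq_zero_of_not_nodup x fun h => (hmem h).1 huT, map_zero,
      Nat.cast_zero]
  · rw [pairingCount_insert_of_adj_iff_eq (u := u) h.finite.sdiff.sdiff (by simp [ho])
      (by have := h.nodup; grind) (by grind), ← h.count (T₁ ++ u :: d :: T₂)
      ((sublist_of_sublist_concat hT₁ (by grind)).append
        (((sublist_of_sublist_cons hT₂ (by grind)).cons_cons d).cons_cons u))]
    congr 2
    ext v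
    simp only [Set.mem_sdiff, Set.mem_singleton_iff, Set.mem_ofPred_eq, List.mem_append,
      List.mem_cons]
    grind

theorem insert_middle_of_adj_iff_eq (h : CountedBy G x S (F₁ ++ u :: d :: F₂) f) (ha : a ∉ S)
    (ho : o ∉ S) (hao : G.Adj a o) (haS : ∀ w ∈ S, G.Adj a w ↔ w = d)
    (hoS : ∀ w ∈ S, G.Adj o w ↔ w = u ∨ w = d) (hx : x a = x u + x d) :
    CountedBy G x (insert a (insert o S)) (F₁ ++ u :: a :: d :: F₂)
      (f ∘ₗ LinearMap.mulRight R (1 + ι R (x a) * ι R (x d))) := by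
  classical
  refine h.insert_middle ha ho hao hoS hx (fun T₁ T₂ => ?_) fun T₁ T₂ hT₁ hT₂ => ?_
  · simp only [LinearMap.comp_apply, LinearMap.mulRight_apply, mul_add, mul_one, wedge_append,
      wedge_cons, mul_assoc, ← (commute_ι_mul_ι (x a) (x d) (wedge R x T₂)).eq]
    simp only [ι_mul_ι_mul_cancel_left, mul_zero, add_zero]
  · have hne := hao.ne
    have hmul : wedge R x (T₁ ++ T₂) * (1 + ι R (x a) * ι R (x d)) =
        wedge R x (T₁ ++ T₂) + wedge R x (T₁ ++ u :: d :: T₂) := by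
      rw [mul_add, mul_one, ← (commute_ι_mul_ι (x a) (x d) _).eq, hx, map_add, add_mul,
        ExteriorAlgebra.ι_sq_zero, add_zero, wedge_append, ← mul_assoc,
        (commute_ι_mul_ι (x u) (x d) (wedge R x T₁)).eq]
      simp only [wedge_append, wedge_cons, mul_assoc]
    rw [pairingCount_insert_of_adj_iff_or (u := o) (w := d) (h.finite.sdiff.insert o)
      (by simp [ha, hne]) (fun hod => ho (hod ▸ h.mem d (by simp))) (by grind),
      if_pos (Set.mem_insert _ _), Set.insert_sdiff_self_of_notMem (by simp [ho]), Nat.cast_add,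
      h.count_insert_sdiff_ite ho hoS hT₁ hT₂, h.count _ (by simpa using hT₁.append hT₂),
      LinearMap.comp_apply, LinearMap.mulRight_apply, hmul, map_add]

end CountedBy

/-! ### Lattice path vectors -/

/-- The vector whose `k`-th entry counts the lattice paths from height `h` in column `a` to the
`k`-th sink. Columns are numbered from the right, a step either climbs by one within a column or
moves one column to the right, and the `k`-th sink lies at height `k` in column `2 * k - 1`. -/
def pathVec (a h : ℕ) : ℕ → ℤ := fun k =>
  if h ≤ k ∧ 2 * k ≤ a + 1 then ((a + 1 - k - h).choose (k - h) : ℤ) else 0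

theorem pathVec_succ {a h : ℕ} (hh : 2 * h ≤ a + 1) :
    pathVec (a + 1) h = pathVec (a + 1) (h + 1) + pathVec a h := by
  funext k
  simp only [pathVec, Pi.add_apply]
  rcases lt_trichotomy k h with hk | rfl | hk
  · simp [hk.not_ge, show ¬ h + 1 ≤ k by omega]
  · simp [hh, show 2 * k ≤ a + 1 + 1 by omega]
  obtain ⟨d, rfl⟩ := Nat.exists_eq_add_of_lt hk
  by_cases htop : 2 * (h + d + 1) ≤ a + 2
  · obtain ⟨c, rfl⟩ : ∃ c, a = c + 2 * h + d := ⟨a - 2 * h - d, by omega⟩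
    rw [if_pos (by omega), if_pos (by omega),
      show c + 2 * h + d + 1 + 1 - (h + d + 1) - h = c + 1 by omega,
      show h + d + 1 - h = d + 1 by omega,
      show c + 2 * h + d + 1 + 1 - (h + d + 1) - (h + 1) = c by omega,
      show h + d + 1 - (h + 1) = d by omega,
      show c + 2 * h + d + 1 - (h + d + 1) - h = c by omega, Nat.choose_succ_succ, Nat.cast_add]
    split_ifs with hlt
    · rfl
    · rw [Nat.choose_eq_zero_of_lt (by omega : c < d + 1), Nat.cast_zero]
  · rw [if_neg (by omega), if_neg (by omega), if_neg (by omega), add_zero]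

theorem pathVec_eq_zero {a h : ℕ} (hh : a + 1 < 2 * h) : pathVec a h = 0 :=
  funext fun _ => if_neg (by omega)

theorem pathVec_apply_eq_zero {a h k : ℕ} (hk : a + 1 < 2 * k) : pathVec a h k = 0 :=
  if_neg (by omega)

theorem pathVec_apply_self {a h : ℕ} (hh : 2 * h ≤ a + 1) : pathVec a h h = 1 := by
  simp [pathVec, hh]

theorem pathVec_apply_zero (a : ℕ) : pathVec a 0 0 = 1 := by
  simp [pathVec]

theorem fwdDiff_iter_pathVec (m : ℕ) {b h : ℕ} (hb : 2 * (h + m) ≤ b + m + 2) :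
    (fwdDiff 1)^[m] (fun a => pathVec a h) b = pathVec (b + m) (h + m) := by
  induction m generalizing b with
  | zero => rfl
  | succ m ih =>
    rw [Function.iterate_succ_apply', fwdDiff, ih (by omega), ih (by omega), add_right_comm b 1 m,
      pathVec_succ (by omega), add_sub_cancel_right]
    rfl

theorem sum_choose_smul_pathVec (m : ℕ) :
    ∑ r ∈ range (m + 3), ((-1) ^ r * ((m + 2).choose r : ℤ)) • pathVec (2 * m + 2 - r) 0 = 0 := by
  have hdiff := fwdDiff_iter_pathVec (m + 2) (b := m) (h := 0) (by omega)
  rw [pathVec_eq_zero (by omega), fwdDiff_iter_eq_sum_shift, ← sum_range_reflect] at hdiff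
  rw [← hdiff]
  refine sum_congr rfl fun r hr => ?_
  have hr : r ≤ m + 2 := by simpa [Nat.lt_succ_iff] using hr
  simp only [show m + 2 + 1 - 1 - r = m + 2 - r by omega, show m + 2 - (m + 2 - r) = r by omega,
    Nat.choose_symm hr, smul_eq_mul, mul_one, show m + (m + 2 - r) = 2 * m + 2 - r by omega]

theorem sum_choose_add_two_smul_pathVec (m : ℕ) :
    ∑ r ∈ range (m + 1), ((-1) ^ r * ((m + 2).choose (r + 2) : ℤ)) • pathVec (2 * m - r) 0 =
      ((m : ℤ) + 2) • pathVec (2 * m + 1) 0 - pathVec (2 * m + 2) 0 := by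
  have hsum := sum_choose_smul_pathVec m
  rw [sum_range_succ', sum_range_succ'] at hsum
  simp only [pow_add, show ∀ r, 2 * m + 2 - (r + 1 + 1) = 2 * m - r by omega, add_assoc,
    Nat.reduceAdd, zero_add, Nat.choose_zero_right, Nat.choose_one_right, Nat.cast_add,
    Nat.cast_ofNat, Nat.cast_one, Nat.reduceSubDiff, tsub_zero, neg_one_sq, neg_mul, mul_one,
    one_mul, pow_one, pow_zero] at hsum
  linear_combination hsum

theorem pathVec_two_mul_add_one_apply (m : ℕ) : pathVec (2 * m + 1) 0 (m + 1) = 1 := by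
  simp [pathVec, show 2 * (m + 1) ≤ 2 * m + 1 + 1 by omega,
    show 2 * m + 1 + 1 - (m + 1) = m + 1 by omega]

theorem pathVec_two_mul_add_two_apply (m : ℕ) : pathVec (2 * m + 2) 0 (m + 1) = m + 2 := by
  have hchoose : (m + 2).choose (m + 1) = m + 2 := Nat.choose_succ_self_right (m + 1)
  simp only [pathVec, Nat.zero_le, show 2 * (m + 1) ≤ 2 * m + 2 + 1 by omega, and_self, if_true,
    show 2 * m + 2 + 1 - (m + 1) = m + 2 by omega, Nat.sub_zero, hchoose, Nat.cast_add,
    Nat.cast_ofNat]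

/-! ### Recurrence of the matching forms -/

/-- The exterior algebra on the sinks of `pathVec`. -/
abbrev SinkAlgebra := ExteriorAlgebra ℤ (ℕ → ℤ)

/-- Contraction with the `k`-th sink coordinate. -/
noncomputable def coord (k : ℕ) : SinkAlgebra →ₗ[ℤ] SinkAlgebra :=
  CliffordAlgebra.contractLeft (Q := 0) (LinearMap.proj k)

theorem coord_ι_mul (k : ℕ) (v : ℕ → ℤ) (b : SinkAlgebra) :
    coord k (ι ℤ v * b) = v k • b - ι ℤ v * coord k b :=
  CliffordAlgebra.contractLeft_ι_mul _ _ _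

theorem coord_one (k : ℕ) : coord k 1 = 0 :=
  CliffordAlgebra.contractLeft_one _ _

theorem coord_coord_self (k : ℕ) (b : SinkAlgebra) : coord k (coord k b) = 0 :=
  CliffordAlgebra.contractLeft_contractLeft _ _

theorem coord_comm (k l : ℕ) (b : SinkAlgebra) : coord k (coord l b) = -coord l (coord k b) :=
  CliffordAlgebra.contractLeft_comm _ _ _

theorem coord_ι (k : ℕ) (v : ℕ → ℤ) : coord k (ι ℤ v) = v k • 1 := by
  simpa [coord_one] using coord_ι_mul k v 1

/-- The coefficient of the product of the sinks `k, …, 0`. -/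
noncomputable def topCoeff : ℕ → SinkAlgebra →ₗ[ℤ] ℤ
  | 0 => ExteriorAlgebra.algebraMapInv.toLinearMap ∘ₗ coord 0
  | k + 1 => topCoeff k ∘ₗ coord (k + 1)

theorem topCoeff_succ (k : ℕ) (b : SinkAlgebra) :
    topCoeff (k + 1) b = topCoeff k (coord (k + 1) b) := rfl

theorem topCoeff_coord_zero (k : ℕ) (b : SinkAlgebra) : topCoeff k (coord 0 b) = 0 := by
  induction k generalizing b with
  | zero => simp [topCoeff, coord_coord_self]
  | succ k ih => rw [topCoeff_succ, coord_comm, map_neg, ih, neg_zero]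

theorem coord_wedge_mul {α : Type*} {k : ℕ} {x : α → ℕ → ℤ} {T : List α} {b : SinkAlgebra}
    (hT : ∀ v ∈ T, x v k = 0) (hb : coord k b = 0) : coord k (wedge ℤ x T * b) = 0 := by
  induction T with
  | nil => simpa using hb
  | cons v T ih =>
    rw [wedge_cons, mul_assoc, coord_ι_mul, hT v (by simp), ih fun w hw => hT w (by simp [hw]),
      zero_smul, mul_zero, sub_zero]

/-- The path vector of the diagonal point in column `a`, as an element of the exterior algebra. -/
noncomputable abbrev diagVec (a : ℕ) : SinkAlgebra := ι ℤ (pathVec a 0)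

/-- The sum over all sets of disjoint pairs of consecutive diagonal points in columns `≤ a` of the
products of their path vectors: each diagonal edge is either unused or used by the matching. -/
noncomputable def pairProd : ℕ → SinkAlgebra
  | 0 => 1
  | a + 1 => (1 + diagVec (a + 1) * diagVec a) * pairProd a

theorem coord_pairProd {k a : ℕ} (h : a + 1 < 2 * k) : coord k (pairProd a) = 0 := by
  induction a with
  | zero => exact coord_one k
  | succ a ih =>
    rw [pairProd, add_mul, one_mul, mul_assoc, map_add, coord_ι_mul, coord_ι_mul, ih (by omega),
      pathVec_apply_eq_zero (by omega), pathVec_apply_eq_zero (by omega)]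
    simp

/-- The linear form which counts the matchings of the columns `≤ a` of `G_n`, as made precise by
`countedBy_region`. All sinks in these columns, namely `0, …, (a + 1) / 2`, have to be hit. -/
noncomputable def columnForm (a : ℕ) : SinkAlgebra →ₗ[ℤ] ℤ :=
  topCoeff ((a + 1) / 2) ∘ₗ LinearMap.mulRight ℤ (pairProd a)

theorem columnForm_apply (a : ℕ) (b : SinkAlgebra) :
    columnForm a b = topCoeff ((a + 1) / 2) (b * pairProd a) := rfl

/-- The analogue of `pairProd` in which the diagonal point of column `0` may also be deleted. -/
noncomputable def cornerProd (a : ℕ) : SinkAlgebra := (1 + diagVec 0) * pairProd a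

theorem cornerProd_succ (a : ℕ) :
    cornerProd (a + 1) = (1 + diagVec (a + 1) * diagVec a) * cornerProd a := by
  rw [cornerProd, pairProd, ← mul_assoc, cornerProd, ← mul_assoc]
  congr 1
  simp only [mul_add, add_mul, mul_one, one_mul, (commute_ι_mul_ι _ _ (diagVec 0)).eq]
  abel

theorem coord_zero_cornerProd (a : ℕ) :
    coord 0 (cornerProd a) = (1 - diagVec a) * cornerProd a := by
  induction a with
  | zero =>
    simp [cornerProd, pairProd, coord_one, coord_ι, pathVec_apply_zero, mul_add, sub_mul]
  | succ a ih =>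
    simp only [cornerProd_succ, add_mul, one_mul, mul_assoc, map_add, coord_ι_mul, ih,
      pathVec_apply_zero, one_smul, sub_mul, mul_sub, mul_add, ι_mul_ι_mul_cancel_left, mul_zero]
    abel

/-- The linear form which counts the perfect matchings of `G_n` after deletion of diagonal vertices.
When an odd number of them is deleted, it deletes `b_n` as well, to keep the number of remaining
vertices even. -/
noncomputable def matchingForm (n : ℕ) : SinkAlgebra →ₗ[ℤ] ℤ :=
  topCoeff n ∘ₗ LinearMap.mulRight ℤ (cornerProd (2 * n))

theorem matchingForm_apply (n : ℕ) (b : SinkAlgebra) :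
    matchingForm n b = topCoeff n (b * cornerProd (2 * n)) := rfl

theorem matchingForm_eq_columnForm_add (n : ℕ) (b : SinkAlgebra) :
    matchingForm n b = columnForm (2 * n) b + columnForm (2 * n) (b * diagVec 0) := by
  rw [matchingForm_apply, columnForm_apply, columnForm_apply, cornerProd,
    show (2 * n + 1) / 2 = n by omega, ← map_add]
  noncomm_ring

theorem matchingForm_zero_one : matchingForm 0 1 = 1 := by
  simp [matchingForm_apply, topCoeff, cornerProd, pairProd, coord_one, coord_ι, pathVec_apply_zero]

theorem matchingForm_diagVec_mul_diagVec (n a : ℕ) :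
    matchingForm n (diagVec (2 * n) * diagVec a) =
      matchingForm n 1 - matchingForm n (diagVec a) := by
  have hzero := topCoeff_coord_zero n (diagVec a * cornerProd (2 * n))
  rw [coord_ι_mul, coord_zero_cornerProd, pathVec_apply_zero, one_smul, sub_mul, one_mul, mul_sub,
    ← mul_assoc, ι_mul_ι_eq_neg, neg_mul, map_sub, map_sub, map_neg] at hzero
  simp only [matchingForm_apply, one_mul]
  linear_combination -hzero

theorem cornerProd_two_mul_succ (m : ℕ) :
    cornerProd (2 * (m + 1)) = (1 + diagVec (2 * m + 2) * diagVec (2 * m + 1) +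
      diagVec (2 * m + 1) * diagVec (2 * m)) * cornerProd (2 * m) := by
  rw [show 2 * (m + 1) = 2 * m + 1 + 1 by ring, cornerProd_succ, cornerProd_succ, ← mul_assoc]
  simp only [add_mul, mul_add, one_mul, mul_one, mul_assoc, ι_mul_ι_mul_cancel_left, mul_zero,
    add_zero]

theorem coord_cornerProd_of_lt {k a : ℕ} (h : a + 1 < 2 * k) : coord k (cornerProd a) = 0 := by
  rw [cornerProd, add_mul, one_mul, map_add, coord_ι_mul, coord_pairProd h,
    pathVec_apply_eq_zero (by omega)]
  simp

theorem coord_cornerProd (m : ℕ) :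
    coord (m + 1) (cornerProd (2 * (m + 1))) =
      (((m : ℤ) + 2) • diagVec (2 * m + 1) - diagVec (2 * m + 2) + diagVec (2 * m)) *
        cornerProd (2 * m) := by
  simp only [cornerProd_two_mul_succ, add_mul, sub_mul, one_mul, mul_assoc, map_add, coord_ι_mul,
    coord_cornerProd_of_lt (show 2 * m + 1 < 2 * (m + 1) by omega),
    pathVec_two_mul_add_one_apply, pathVec_two_mul_add_two_apply,
    pathVec_apply_eq_zero (show 2 * m + 1 < 2 * (m + 1) by omega), smul_mul_assoc]
  simp

theorem matchingForm_succ_diagVec_two_mul_add_one (m : ℕ) :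
    matchingForm (m + 1) (diagVec (2 * m + 1)) = matchingForm m 1 := by
  rw [matchingForm_apply, matchingForm_apply, topCoeff_succ, coord_ι_mul, coord_cornerProd,
    pathVec_two_mul_add_one_apply, one_smul, cornerProd_two_mul_succ, ← mul_assoc, ← sub_mul]
  congr 3
  rw [mul_add, mul_sub, mul_smul_comm, ExteriorAlgebra.ι_sq_zero,
    ι_mul_ι_eq_neg _ (pathVec (2 * m + 2) 0)]
  module

theorem matchingForm_succ_diagVec {m a : ℕ} (ha : a ≤ 2 * m) :
    matchingForm (m + 1) (diagVec a) = matchingForm m 1 - matchingForm m (diagVec a) +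
      ∑ r ∈ range (m + 1), (-1) ^ r * ((m + 2).choose (r + 2) : ℤ) *
        matchingForm m (diagVec (2 * m - r) * diagVec a) := by
  have hsum : ((m : ℤ) + 2) • diagVec (2 * m + 1) - diagVec (2 * m + 2) =
      ∑ r ∈ range (m + 1), ((-1) ^ r * ((m + 2).choose (r + 2) : ℤ)) • diagVec (2 * m - r) := by
    simp only [← map_smul, ← map_sub, ← map_sum, sum_choose_add_two_smul_pathVec]
  have hstep : matchingForm (m + 1) (diagVec a) =
      matchingForm m ((((m : ℤ) + 2) • diagVec (2 * m + 1) - diagVec (2 * m + 2) +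
        diagVec (2 * m)) * diagVec a) := by
    rw [matchingForm_apply, topCoeff_succ, coord_ι_mul, pathVec_apply_eq_zero (by omega), zero_smul,
      zero_sub, coord_cornerProd, ← mul_assoc, ← neg_mul, matchingForm_apply]
    simp only [← map_smul, ← map_sub, ← map_add, ι_mul_ι_eq_neg (pathVec a 0), neg_neg]
  rw [hstep, hsum, add_mul, map_add, matchingForm_diagVec_mul_diagVec, sum_mul, map_sum, add_comm]
  simp only [smul_mul_assoc, map_smul, smul_eq_mul]

/-! ### Sweeping the columns of the graph -/

/-- The `h`-th vertex with even coordinate sum in column `a` of `G_n`. Columns are counted from the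
right and the vertices of a column from the diagonal upwards, starting at `0`. -/
def evenPt (n a h : ℕ) : ℤ × ℤ := (2 * n - a, 2 * n - a + 2 * h)

/-- The vertex with odd coordinate sum directly above `evenPt n a h`. -/
def oddPt (n a h : ℕ) : ℤ × ℤ := (2 * n - a, 2 * n - a + 2 * h + 1)

/-- The path vector of a vertex with even coordinate sum. -/
def pointVec (n : ℕ) (p : ℤ × ℤ) : ℕ → ℤ :=
  pathVec (2 * n - p.1).toNat ((p.2 - p.1) / 2).toNat

@[simp]
theorem pointVec_evenPt (n a h : ℕ) : pointVec n (evenPt n a h) = pathVec a h := by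
  simp [pointVec, evenPt]

theorem pointVec_evenPt_succ {a h : ℕ} (n : ℕ) (hh : 2 * h ≤ a + 1) :
    pointVec n (evenPt n (a + 1) h) =
      pointVec n (evenPt n (a + 1) (h + 1)) + pointVec n (evenPt n a h) := by
  simpa using pathVec_succ hh

/-- The vertices of `G_n` in the columns `< a` (counted from the right) and those of column `a`
from `evenPt n a h` upwards, without the vertex `(2n, 2n+1)`. -/
def region (n a h : ℕ) : Set (ℤ × ℤ) :=
  {p | p.1 ≤ 2 * n ∧ p.1 ≤ p.2 ∧ p.2 ≤ 2 * n + 1 ∧ (p.1 = 2 * n → p.2 ≤ 2 * n) ∧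
    (2 * (n : ℤ) - a < p.1 ∨ p.1 = 2 * n - a ∧ 2 * (n : ℤ) - a + 2 * h ≤ p.2)}

theorem finite_region (n a h : ℕ) : (region n a h).Finite := by
  refine (Set.finite_Icc ((2 * n - a, 2 * n - a) : ℤ × ℤ) (2 * n, 2 * n + 1)).subset ?_
  rintro ⟨p, q⟩ hp
  simp only [region, Set.mem_ofPred_eq] at hp
  simp only [Set.mem_Icc, Prod.mk_le_mk]
  omega

theorem region_zero_zero (n : ℕ) : region n 0 0 = {evenPt n 0 0} := by
  ext ⟨p, q⟩
  simp only [region, evenPt, Set.mem_ofPred_eq, Set.mem_singleton_iff, Prod.mk.injEq]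
  omega

theorem region_succ_eq_insert {a h : ℕ} (n : ℕ) (hh : 2 * h ≤ a + 1) : region n (a + 1) h =
    insert (evenPt n (a + 1) h) (insert (oddPt n (a + 1) h) (region n (a + 1) (h + 1))) := by
  ext ⟨p, q⟩
  simp only [region, evenPt, oddPt, Set.mem_ofPred_eq, Set.mem_insert_iff, Prod.mk.injEq]
  omega

theorem region_succ_of_eq {a h : ℕ} (n : ℕ) (hh : 2 * h = a + 2) :
    region n (a + 1) h = insert (evenPt n (a + 1) h) (region n a 0) := by
  ext ⟨p, q⟩
  simp only [region, evenPt, Set.mem_ofPred_eq, Set.mem_insert_iff, Prod.mk.injEq]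
  omega

theorem region_succ_of_lt {a h : ℕ} (n : ℕ) (hh : a + 2 < 2 * h) :
    region n (a + 1) h = region n a 0 := by
  ext ⟨p, q⟩
  simp only [region, Set.mem_ofPred_eq]
  omega

theorem evenPt_notMem_region_succ (n a h : ℕ) : evenPt n a h ∉ region n a (h + 1) := by
  simp only [region, evenPt, Set.mem_ofPred_eq]
  omega

theorem oddPt_notMem_region_succ (n a h : ℕ) : oddPt n a h ∉ region n a (h + 1) := by
  simp only [region, oddPt, Set.mem_ofPred_eq]
  omega

theorem evenPt_ne_oddPt (n a h : ℕ) : evenPt n a h ≠ oddPt n a h := by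
  simp [evenPt, oddPt]

theorem even_ncard_region_succ_iff {n a h : ℕ} (hh : 2 * h ≤ a + 3) :
    Even (region n (a + 1) 0).ncard ↔ Even (region n (a + 1) h).ncard := by
  induction h with
  | zero => rfl
  | succ h ih =>
    have hfin := finite_region n (a + 1) (h + 1)
    rw [ih (by omega), region_succ_eq_insert n (by omega), Set.ncard_insert_of_notMem
      (by simp [evenPt_ne_oddPt, evenPt_notMem_region_succ]) (hfin.insert _),
      Set.ncard_insert_of_notMem (oddPt_notMem_region_succ n _ h) hfin]
    simp [Nat.even_add_one]

theorem even_ncard_region_iff (n a : ℕ) :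
    Even (region n a 0).ncard ↔ Even ((a + 1) / 2 + 1) := by
  induction a with
  | zero => simp [region_zero_zero]
  | succ a ih =>
    rcases Nat.even_or_odd' a with ⟨k, rfl | rfl⟩
    · have htop : evenPt n (2 * k + 1) (k + 1) ∉ region n (2 * k) 0 := by
        rw [← region_succ_of_lt (h := k + 2) n (by omega)]
        exact evenPt_notMem_region_succ n _ _
      rw [even_ncard_region_succ_iff (h := k + 1) (by omega), region_succ_of_eq n (by ring),
        Set.ncard_insert_of_notMem htop (finite_region n _ _), Nat.even_add_one, ih,
        show (2 * k + 1) / 2 = k by omega, show (2 * k + 1 + 1) / 2 = k + 1 by omega,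
        ← Nat.even_add_one]
    · rw [even_ncard_region_succ_iff (h := k + 2) (by omega), region_succ_of_lt n (by omega), ih,
        show (2 * k + 1 + 1 + 1) / 2 = (2 * k + 1 + 1) / 2 by omega]

theorem adj_evenPt_oddPt {n a h : ℕ} (ha : a + 1 ≤ 2 * n) (hh : 2 * h ≤ a + 1) :
    (Gph n).Adj (evenPt n (a + 1) h) (oddPt n (a + 1) h) := by
  refine .inl (.inr (.inl ⟨rfl, rfl, ?_⟩))
  simp only [evenPt]
  omega

theorem adj_evenPt_iff {n a h : ℕ} (ha : a + 1 ≤ 2 * n) {w : ℤ × ℤ}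
    (hw : w ∈ region n (a + 1) (h + 1)) :
    (Gph n).Adj (evenPt n (a + 1) h) w ↔ h = 0 ∧ w = evenPt n a 0 := by
  obtain ⟨p, q⟩ := w
  simp only [region, Set.mem_ofPred_eq] at hw
  simp only [Gph, edgeRel, evenPt, Int.odd_iff, Prod.mk.injEq]
  omega

theorem adj_oddPt_iff {n a h : ℕ} (ha : a + 1 ≤ 2 * n) (hh : 2 * h ≤ a + 1) {w : ℤ × ℤ}
    (hw : w ∈ region n (a + 1) (h + 1)) :
    (Gph n).Adj (oddPt n (a + 1) h) w ↔ w = evenPt n (a + 1) (h + 1) ∨ w = evenPt n a h := by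
  obtain ⟨p, q⟩ := w
  simp only [region, Set.mem_ofPred_eq] at hw
  simp only [Gph, edgeRel, evenPt, oddPt, Int.odd_iff, Prod.mk.injEq]
  constructor
  · rintro (h | h) <;> omega
  · rintro (⟨rfl, rfl⟩ | ⟨rfl, rfl⟩) <;> omega

/-- The lowest `h` vertices with even coordinate sum in column `a` of `G_n`, from top to bottom. -/
def column (n a h : ℕ) : List (ℤ × ℤ) := (List.range h).reverse.map (evenPt n a)

/-- The diagonal vertices of `G_n` in the columns `< a`, from left to right. -/
def diagonal (n a : ℕ) : List (ℤ × ℤ) := (List.range a).reverse.map (evenPt n · 0)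

@[simp]
theorem column_zero (n a : ℕ) : column n a 0 = [] := rfl

theorem column_succ (n a h : ℕ) : column n a (h + 1) = evenPt n a h :: column n a h := by
  simp [column, List.range_succ]

theorem diagonal_succ (n a : ℕ) : diagonal n (a + 1) = evenPt n a 0 :: diagonal n a := by
  simp [diagonal, List.range_succ]

/-- The vertices at which the matchings of `region n a 0` are glued to the columns on its left, and
the diagonal vertices. -/
def frontierList (n a : ℕ) : List (ℤ × ℤ) := column n a ((a + 1) / 2 + 1) ++ diagonal n a

theorem exists_eq_evenPt_of_mem_frontierList {n a : ℕ} {v : ℤ × ℤ} (hv : v ∈ frontierList n a) :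
    ∃ b ≤ a, ∃ h, v = evenPt n b h := by
  simp only [frontierList, column, diagonal, List.mem_append, List.mem_map, List.mem_reverse,
    List.mem_range] at hv
  obtain ⟨h, -, rfl⟩ | ⟨b, hb, rfl⟩ := hv
  · exact ⟨a, le_rfl, h, rfl⟩
  · exact ⟨b, hb.le, 0, rfl⟩

theorem CountedBy.column_top_odd {n k : ℕ} (hk : 2 * k + 1 ≤ 2 * n)
    (h : CountedBy (Gph n) (pointVec n) (region n (2 * k) 0) (frontierList n (2 * k))
      (columnForm (2 * k))) :
    CountedBy (Gph n) (pointVec n) (region n (2 * k + 1) (k + 1))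
      (evenPt n (2 * k + 1) (k + 1) :: frontierList n (2 * k))
      (topCoeff (k + 1) ∘ₗ LinearMap.mulRight ℤ (pairProd (2 * k))) := by
  have hregion : region n (2 * k + 1) (k + 2) = region n (2 * k) 0 :=
    region_succ_of_lt n (by omega)
  have hcoord (T : List (ℤ × ℤ)) (hT : T.Sublist (frontierList n (2 * k))) :
      coord (k + 1) (wedge ℤ (pointVec n) T * pairProd (2 * k)) = 0 := by
    refine coord_wedge_mul (fun v hv => ?_) (coord_pairProd (by omega))
    obtain ⟨b, hb, i, rfl⟩ := exists_eq_evenPt_of_mem_frontierList (hT.subset hv)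
    rw [pointVec_evenPt, pathVec_apply_eq_zero (by omega)]
  rw [region_succ_of_eq n (by ring)]
  refine h.cons_isolated (hregion ▸ evenPt_notMem_region_succ n _ _) (fun w hw => ?_)
    (fun T hT => ?_) fun T hT => ?_
  · rw [adj_evenPt_iff hk (hregion ▸ hw)]
    exact fun hw => k.succ_ne_zero hw.1
  · rw [LinearMap.comp_apply, LinearMap.mulRight_apply, topCoeff_succ, hcoord T hT, map_zero]
  · rw [LinearMap.comp_apply, LinearMap.mulRight_apply, topCoeff_succ, mul_assoc, coord_ι_mul,
      hcoord T hT, pointVec_evenPt, pathVec_apply_self (by omega), one_smul, mul_zero, sub_zero,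
      columnForm_apply, show (2 * k + 1) / 2 = k by omega]

theorem CountedBy.column_top_even {n k : ℕ} (hk : 2 * k + 2 ≤ 2 * n)
    (h : CountedBy (Gph n) (pointVec n) (region n (2 * k + 1) 0) (frontierList n (2 * k + 1))
      (columnForm (2 * k + 1))) :
    CountedBy (Gph n) (pointVec n) (region n (2 * k + 2) (k + 1))
      (evenPt n (2 * k + 2) (k + 1) :: (column n (2 * k + 1) (k + 1) ++ diagonal n (2 * k + 1)))
      (topCoeff (k + 1) ∘ₗ LinearMap.mulRight ℤ (pairProd (2 * k + 1))) := by
  have hregion : region n (2 * k + 2) (k + 2) = region n (2 * k + 1) 0 :=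
    region_succ_of_lt n (by omega)
  have hvec : pathVec (2 * k + 2) (k + 1) = pathVec (2 * k + 1) (k + 1) := by
    rw [pathVec_succ (by omega), pathVec_eq_zero (by omega), zero_add]
  have hform : columnForm (2 * k + 1) =
      topCoeff (k + 1) ∘ₗ LinearMap.mulRight ℤ (pairProd (2 * k + 1)) := by
    rw [columnForm, show (2 * k + 1 + 1) / 2 = k + 1 by omega]
  rw [frontierList, show (2 * k + 1 + 1) / 2 = k + 1 by omega, column_succ, List.cons_append,
    ← hregion, hform] at h
  rw [region_succ_eq_insert n (by omega)]
  refine h.cons_pendant (evenPt_notMem_region_succ n _ _) (oddPt_notMem_region_succ n _ _)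
    (adj_evenPt_oddPt hk (by omega)) (fun w hw => ?_) (fun w hw => ?_) (by simpa using hvec)
  · rw [adj_evenPt_iff hk hw]
    exact fun hw => k.succ_ne_zero hw.1
  · have hne : w ≠ evenPt n (2 * k + 2) (k + 2) := by
      rintro rfl
      simp only [region, evenPt, Set.mem_ofPred_eq] at hw
      omega
    rw [adj_oddPt_iff hk (by omega) hw]
    exact or_iff_right hne

theorem CountedBy.column_top {n a : ℕ} (ha : a + 1 ≤ 2 * n)
    (h : CountedBy (Gph n) (pointVec n) (region n a 0) (frontierList n a) (columnForm a)) :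
    CountedBy (Gph n) (pointVec n) (region n (a + 1) (a / 2 + 1))
      (evenPt n (a + 1) (a / 2 + 1) :: (column n a (a / 2 + 1) ++ diagonal n a))
      (topCoeff (a / 2 + 1) ∘ₗ LinearMap.mulRight ℤ (pairProd a)) := by
  rcases Nat.even_or_odd' a with ⟨k, rfl | rfl⟩
  · have htop := h.column_top_odd ha
    rw [frontierList, show (2 * k + 1) / 2 = k by omega] at htop
    rwa [show 2 * k / 2 = k by omega]
  · rw [show (2 * k + 1) / 2 = k by omega]
    exact h.column_top_even ha

theorem CountedBy.column_sweep {n a h : ℕ} {F D : List (ℤ × ℤ)} {f : SinkAlgebra →ₗ[ℤ] ℤ}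
    (ha : a + 1 ≤ 2 * n) (hh : 2 * h ≤ a + 1)
    (hf : CountedBy (Gph n) (pointVec n) (region n (a + 1) (h + 1))
      (F ++ evenPt n (a + 1) (h + 1) :: (column n a (h + 1) ++ D)) f) :
    CountedBy (Gph n) (pointVec n) (region n (a + 1) 0)
      (F ++ column n (a + 1) (h + 2) ++ evenPt n a 0 :: D)
      (f ∘ₗ LinearMap.mulRight ℤ (1 + diagVec (a + 1) * diagVec a)) := by
  induction h generalizing F with
  | zero =>
    have hinsert := hf.insert_middle_of_adj_iff_eq (evenPt_notMem_region_succ n _ _)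
      (oddPt_notMem_region_succ n _ _) (adj_evenPt_oddPt ha hh)
      (fun w hw => by simp [adj_evenPt_iff ha hw]) (fun w hw => adj_oddPt_iff ha hh hw)
      (pointVec_evenPt_succ n hh)
    rw [← region_succ_eq_insert n hh, pointVec_evenPt, pointVec_evenPt] at hinsert
    simpa [column_succ] using hinsert
  | succ h ih =>
    rw [column_succ, List.cons_append] at hf
    have hinsert := hf.insert_middle_of_forall_not_adj (evenPt_notMem_region_succ n _ _)
      (oddPt_notMem_region_succ n _ _) (adj_evenPt_oddPt ha hh)
      (fun w hw => by simp [adj_evenPt_iff ha hw]) (fun w hw => adj_oddPt_iff ha hh hw)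
      (pointVec_evenPt_succ n hh)
    rw [← region_succ_eq_insert n hh] at hinsert
    have hnext := ih (F := F ++ [evenPt n (a + 1) (h + 2)]) (by omega)
      (hinsert.mono (by simp))
    simpa [column_succ _ _ (h + 2)] using hnext

theorem countedBy_region {n a : ℕ} (ha : a ≤ 2 * n) :
    CountedBy (Gph n) (pointVec n) (region n a 0) (frontierList n a) (columnForm a) := by
  induction a with
  | zero =>
    rw [region_zero_zero]
    apply CountedBy.singleton <;>
      simp [columnForm_apply, topCoeff, pairProd, coord_one, coord_ι, pathVec_apply_zero]
  | succ a ih =>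
    have ht : (a + 1 + 1) / 2 = a / 2 + 1 := by omega
    have hsweep := CountedBy.column_sweep (F := []) ha (by omega) ((ih (by omega)).column_top ha)
    have hform : columnForm (a + 1) = (topCoeff (a / 2 + 1) ∘ₗ LinearMap.mulRight ℤ (pairProd a)) ∘ₗ
        LinearMap.mulRight ℤ (1 + diagVec (a + 1) * diagVec a) := by
      ext b
      simp [columnForm_apply, pairProd, ht, mul_assoc]
    rwa [hform, frontierList, ht, diagonal_succ]

/-! ### Deleting diagonal vertices -/

/-- The diagonal vertices in the columns listed by `L`. -/
def diagonalSet (n : ℕ) (L : List ℕ) : Set (ℤ × ℤ) := {v | v ∈ L.map (evenPt n · 0)}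

theorem evenPt_left_injective (n h : ℕ) : Function.Injective (evenPt n · h) := fun a b hab => by
  simpa [evenPt] using congrArg Prod.fst hab

theorem map_evenPt_sublist_diagonal {n m : ℕ} {L : List ℕ} (hL : L.SortedGT)
    (hLm : ∀ a ∈ L, a < m) : (L.map (evenPt n · 0)).Sublist (diagonal n m) := by
  refine .map _ (List.sublist_of_subperm_of_sortedGE (hL.nodup.subperm fun a ha => ?_)
    hL.sortedGE (List.sortedLT_range m).reverse.sortedGE)
  simpa using hLm a ha

theorem diagonal_succ_sublist_frontierList (n a : ℕ) :
    (diagonal n (a + 1)).Sublist (frontierList n a) := by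
  have hlast : [evenPt n a 0].Sublist (column n a ((a + 1) / 2 + 1)) := by
    simpa [column] using ⟨0, by simp⟩
  simpa [diagonal_succ, frontierList] using hlast.append (List.Sublist.refl (diagonal n a))

theorem wedge_map_evenPt (n : ℕ) (L : List ℕ) :
    wedge ℤ (pointVec n) (L.map (evenPt n · 0)) = wedge ℤ (pathVec · 0) L := by
  simp [wedge, Function.comp_def]

theorem pairingCount_region_sdiff {n : ℕ} {L : List ℕ} (hL : L.SortedGT)
    (hLn : ∀ a ∈ L, a ≤ 2 * n) :
    (pairingCount (Gph n) (region n (2 * n) 0 \ diagonalSet n L) : ℤ) =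
      columnForm (2 * n) (wedge ℤ (pathVec · 0) L) := by
  rw [← wedge_map_evenPt n, ← (countedBy_region le_rfl).count _
    ((map_evenPt_sublist_diagonal hL fun a ha => Nat.lt_succ_of_le (hLn a ha)).trans
      (diagonal_succ_sublist_frontierList n _)), diagonalSet]

theorem even_ncard_region_sdiff_iff {n : ℕ} {L : List ℕ} (hL : L.Nodup)
    (hLn : ∀ a ∈ L, a ≤ 2 * n) :
    Even (region n (2 * n) 0 \ diagonalSet n L).ncard ↔
      (Odd n ↔ Even L.length) := by
  have hfin := finite_region n (2 * n) 0
  have hsub : diagonalSet n L ⊆ region n (2 * n) 0 := by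
    simp only [diagonalSet, Set.subset_def, Set.mem_ofPred_eq, List.mem_map]
    rintro _ ⟨a, ha, rfl⟩
    have := hLn a ha
    simp only [region, evenPt, Set.mem_ofPred_eq]
    omega
  have hcard : (diagonalSet n L).ncard = L.length := by
    rw [diagonalSet, ← List.coe_toFinset, Set.ncard_coe_finset,
      List.toFinset_card_of_nodup (hL.map (evenPt_left_injective n 0)), List.length_map]
  rw [Set.ncard_sdiff hsub (hfin.subset hsub), Nat.even_sub (Set.ncard_le_ncard hsub hfin), hcard,
    even_ncard_region_iff, show (2 * n + 1) / 2 = n by omega, Nat.even_add_one,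
    Nat.not_even_iff_odd]

theorem Vset_eq_region_of_odd {n : ℕ} (hn : Odd n) : Vset n = region n (2 * n) 0 := by
  ext ⟨p, q⟩
  rw [Nat.odd_iff] at hn
  simp only [Vset, memV, region, Set.mem_ofPred_eq]
  omega

theorem bvertex_of_odd {n : ℕ} (hn : Odd n) : bvertex n = evenPt n 0 0 := by
  simp [bvertex, evenPt, Nat.odd_iff.1 hn]

theorem bvertex_of_even {n : ℕ} (hn : Even n) : bvertex n = oddPt n 0 0 := by
  simp [bvertex, oddPt, Nat.even_iff.1 hn]

theorem Vset_eq_insert_of_even {n : ℕ} (hn : Even n) :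
    Vset n = insert (bvertex n) (region n (2 * n) 0) := by
  ext ⟨p, q⟩
  rw [bvertex_of_even hn]
  rw [Nat.even_iff] at hn
  simp only [Vset, memV, region, oddPt, Set.mem_insert_iff, Set.mem_ofPred_eq, Prod.mk.injEq]
  omega

theorem bvertex_notMem_region_of_even {n : ℕ} (hn : Even n) : bvertex n ∉ region n (2 * n) 0 := by
  rw [bvertex_of_even hn]
  simp only [region, oddPt, Set.mem_ofPred_eq]
  omega

theorem adj_bvertex_iff_of_even {n : ℕ} (hn : Even n) {w : ℤ × ℤ} (hw : w ∈ region n (2 * n) 0) :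
    (Gph n).Adj (bvertex n) w ↔ w = evenPt n 0 0 := by
  obtain ⟨p, q⟩ := w
  rw [bvertex_of_even hn]
  rw [Nat.even_iff] at hn
  simp only [region, Set.mem_ofPred_eq] at hw
  simp only [Gph, edgeRel, oddPt, evenPt, Int.odd_iff, Prod.mk.injEq]
  omega

theorem Zpm_eq_pairingCount (n : ℕ) (U : Set (ℤ × ℤ)) :
    Zpm n U = pairingCount (Gph n) (Vset n \ U) :=
  card_isPerfectMatching_induce _ _

theorem evenPt_zero_mem_sdiff {n : ℕ} {L : List ℕ} (hL : ∀ a ∈ L, 0 < a) :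
    evenPt n 0 0 ∈ region n (2 * n) 0 \ diagonalSet n L := by
  refine ⟨?_, fun hmem => ?_⟩
  · simp only [region, evenPt, Set.mem_ofPred_eq]
    omega
  · obtain ⟨a, ha, heq⟩ := List.mem_map.1 hmem
    exact (hL a ha).ne' (evenPt_left_injective n 0 heq)

theorem matchingForm_wedge {n : ℕ} {L : List ℕ} (hL : L.SortedGT) (hL₀ : ∀ a ∈ L, 0 < a)
    (hLn : ∀ a ∈ L, a ≤ 2 * n) [Decidable (Odd n ↔ Even L.length)] :
    matchingForm n (wedge ℤ (pathVec · 0) L) =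
      (if (Odd n ↔ Even L.length) then pairingCount (Gph n) (region n (2 * n) 0 \ diagonalSet n L)
      else pairingCount (Gph n) ((region n (2 * n) 0 \ diagonalSet n L) \ {evenPt n 0 0}) : ℕ) := by
  classical
  have hset : (region n (2 * n) 0 \ diagonalSet n L) \ {evenPt n 0 0} =
      region n (2 * n) 0 \ diagonalSet n (L ++ [0]) := by
    ext v
    simp [diagonalSet, eq_comm, and_assoc]
  have hsorted : (L ++ [0]).SortedGT := by
    simpa [List.sortedGT_iff_pairwise, List.pairwise_append] using ⟨hL.pairwise, hL₀⟩
  rw [← if_congr (even_ncard_region_sdiff_iff hL.nodup hLn) rfl rfl,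
    ← pairingCount_add_pairingCount_sdiff_singleton _ (finite_region n _ 0).sdiff
      (evenPt_zero_mem_sdiff hL₀), hset, matchingForm_eq_columnForm_add, Nat.cast_add,
    pairingCount_region_sdiff hL hLn,
    pairingCount_region_sdiff hsorted (by simpa [or_imp, forall_and] using hLn)]
  simp

theorem bvertex_notMem_diagonalSet_of_even {n : ℕ} (hn : Even n) (L : List ℕ) :
    bvertex n ∉ diagonalSet n L := by
  intro hmem
  obtain ⟨a, -, heq⟩ := List.mem_map.1 hmem
  simp only [bvertex_of_even hn, evenPt, oddPt, Prod.mk.injEq] at heq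
  omega

theorem Zpm_diagonalSet {n : ℕ} {L : List ℕ} (hL₀ : ∀ a ∈ L, 0 < a) [Decidable (Odd n)] :
    Zpm n (diagonalSet n L) =
      if Odd n then pairingCount (Gph n) (region n (2 * n) 0 \ diagonalSet n L)
      else pairingCount (Gph n) ((region n (2 * n) 0 \ diagonalSet n L) \ {evenPt n 0 0}) := by
  rw [Zpm_eq_pairingCount]
  split_ifs with hn
  · rw [Vset_eq_region_of_odd hn]
  · rw [Nat.not_odd_iff_even] at hn
    rw [Vset_eq_insert_of_even hn,
      Set.insert_sdiff_of_notMem _ (bvertex_notMem_diagonalSet_of_even hn L)]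
    exact pairingCount_insert_of_adj_iff_eq (finite_region n _ 0).sdiff
      (fun hmem => bvertex_notMem_region_of_even hn hmem.1) (evenPt_zero_mem_sdiff hL₀)
      fun w hw => adj_bvertex_iff_of_even hn hw.1

theorem Zpm_insert_bvertex_diagonalSet {n : ℕ} (L : List ℕ) [Decidable (Odd n)] :
    Zpm n (insert (bvertex n) (diagonalSet n L)) =
      if Odd n then pairingCount (Gph n) ((region n (2 * n) 0 \ diagonalSet n L) \ {evenPt n 0 0})
      else pairingCount (Gph n) (region n (2 * n) 0 \ diagonalSet n L) := by
  rw [Zpm_eq_pairingCount]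
  split_ifs with hn
  · rw [Vset_eq_region_of_odd hn, bvertex_of_odd hn, Set.sdiff_sdiff, Set.union_singleton]
  · rw [Nat.not_odd_iff_even] at hn
    rw [Vset_eq_insert_of_even hn, Set.insert_sdiff_of_mem _ (Set.mem_insert _ _),
      Set.sdiff_insert_of_notMem (bvertex_notMem_region_of_even hn)]

theorem Zpm_diagonalSet_eq_matchingForm {n : ℕ} {L : List ℕ} (hL : L.SortedGT)
    (hL₀ : ∀ a ∈ L, 0 < a) (hLn : ∀ a ∈ L, a ≤ 2 * n) (heven : Even L.length) :
    (Zpm n (diagonalSet n L) : ℤ) = matchingForm n (wedge ℤ (pathVec · 0) L) := by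
  classical
  simp only [Zpm_diagonalSet hL₀, matchingForm_wedge hL hL₀ hLn, heven, iff_true]

theorem Zpm_insert_bvertex_diagonalSet_eq_matchingForm {n : ℕ} {L : List ℕ} (hL : L.SortedGT)
    (hL₀ : ∀ a ∈ L, 0 < a) (hLn : ∀ a ∈ L, a ≤ 2 * n) (hodd : Odd L.length) :
    (Zpm n (insert (bvertex n) (diagonalSet n L)) : ℤ) =
      matchingForm n (wedge ℤ (pathVec · 0) L) := by
  classical
  simp only [Zpm_insert_bvertex_diagonalSet, matchingForm_wedge hL hL₀ hLn,
    Nat.not_even_iff_odd.2 hodd, iff_false, ite_not]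

theorem evenPt_two_mul_sub {n i : ℕ} (hi : i ≤ 2 * n) :
    evenPt n (2 * n - i) 0 = ((i : ℤ), (i : ℤ)) := by
  simp [evenPt, Nat.cast_sub hi]

theorem Zpm_empty (n : ℕ) : (Zpm n ∅ : ℤ) = matchingForm n 1 := by
  have hset : diagonalSet n [] = ∅ := by
    simp [diagonalSet]
  simpa [hset] using Zpm_diagonalSet_eq_matchingForm (n := n) (L := [])
    (by simp [List.sortedGT_iff_pairwise]) (by simp) (by simp) (by simp)

theorem Zpm_pair {n i j : ℕ} (hij : i < j) (hj : j < 2 * n) :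
    (Zpm n {((i : ℤ), (i : ℤ)), ((j : ℤ), (j : ℤ))} : ℤ) =
      matchingForm n (diagVec (2 * n - i) * diagVec (2 * n - j)) := by
  have hset : diagonalSet n [2 * n - i, 2 * n - j] = {((i : ℤ), (i : ℤ)), ((j : ℤ), (j : ℤ))} := by
    ext v
    simp [diagonalSet, evenPt_two_mul_sub (hij.trans hj).le, evenPt_two_mul_sub hj.le]
  rw [← hset, Zpm_diagonalSet_eq_matchingForm
    (by simp only [List.sortedGT_iff_pairwise, List.pairwise_pair]; omega)
    (by grind) (by simp) (by simp)]
  simp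

theorem Zpm_bvertex {n j : ℕ} (hj : j < 2 * n) :
    (Zpm n {((j : ℤ), (j : ℤ)), bvertex n} : ℤ) = matchingForm n (diagVec (2 * n - j)) := by
  have hset : insert (bvertex n) (diagonalSet n [2 * n - j]) =
      {((j : ℤ), (j : ℤ)), bvertex n} := by
    ext v
    simp [diagonalSet, evenPt_two_mul_sub hj.le, or_comm]
  rw [← hset, Zpm_insert_bvertex_diagonalSet_eq_matchingForm
    (by simp [List.sortedGT_iff_pairwise]) (by grind) (by simp) (by simp)]
  simp

theorem Zpm_empty_pos (n : ℕ) : 0 < Zpm n ∅ := by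
  rw [← Int.natCast_pos, Zpm_empty]
  induction n with
  | zero => rw [matchingForm_zero_one]; exact Int.one_pos
  | succ m ih =>
    have hsplit := matchingForm_diagVec_mul_diagVec (m + 1) (2 * m + 1)
    have hpair := Zpm_pair (n := m + 1) Nat.zero_lt_one (by omega)
    rw [matchingForm_succ_diagVec_two_mul_add_one] at hsplit
    rw [Nat.sub_zero, show 2 * (m + 1) - 1 = 2 * m + 1 by omega] at hpair
    omega

theorem gb_eq {n j : ℕ} (hj : j < 2 * n) :
    gb n j = matchingForm n (diagVec (2 * n - j)) / Zpm n ∅ := by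
  rw [gb, ← Zpm_bvertex hj, Int.cast_natCast]

theorem ghat_eq {n i j : ℕ} (hi : i < 2 * n) (hj : j < 2 * n) :
    ghat n i j = matchingForm n (diagVec (2 * n - i) * diagVec (2 * n - j)) / Zpm n ∅ := by
  rcases lt_trichotomy i j with h | rfl | h
  · rw [ghat, if_pos h, gfn, ← Zpm_pair h hj, Int.cast_natCast]
  · rw [ghat, if_neg (lt_irrefl _), if_neg (lt_irrefl _), ExteriorAlgebra.ι_sq_zero, map_zero,
      Int.cast_zero, zero_div]
  · rw [ghat, if_neg h.not_gt, if_pos h, gfn, ι_mul_ι_eq_neg, map_neg, Int.cast_neg,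
      ← Zpm_pair h hi, Int.cast_natCast, neg_div]

/-- For `n ≥ 1`: `g_n^b(0) = 1`, `g_n^b(1) = Z_{n−1}/Z_n`, and for `2 ≤ j ≤ 2n−1`:
`g_n^b(j) = (Z_{n−1}/Z_n)·(1 − g_{n−1}^b(j−2) + Σ_{r=0}^{n−1} (−1)^r·binom(n+1,r+2)·ĝ_{n−1}(r,j−2))`. -/
theorem gb_recurrence (n : ℕ) (hn : 1 ≤ n) :
    gb n 0 = 1 ∧
    gb n 1 = (Zpm (n-1) ∅ : ℚ) / (Zpm n ∅ : ℚ) ∧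
    ∀ j : ℕ, 2 ≤ j → j ≤ 2*n - 1 →
      gb n j = (Zpm (n-1) ∅ : ℚ) / (Zpm n ∅ : ℚ) *
        (1 - gb (n-1) (j-2) +
          ∑ r ∈ Finset.range n, (-1)^r * (Nat.choose (n+1) (r+2) : ℚ) * ghat (n-1) r (j-2)) := by
  obtain ⟨m, rfl⟩ := Nat.exists_eq_add_of_le' hn
  have hZ (k : ℕ) : (Zpm k ∅ : ℚ) ≠ 0 := mod_cast (Zpm_empty_pos k).ne'
  rw [Nat.add_sub_cancel]
  refine ⟨?_, ?_, fun j hj₂ hj => ?_⟩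
  · have h := matchingForm_diagVec_mul_diagVec (m + 1) (2 * (m + 1))
    rw [ExteriorAlgebra.ι_sq_zero, map_zero, eq_comm, sub_eq_zero, ← Zpm_empty] at h
    rw [gb_eq (by omega), Nat.sub_zero, ← h, Int.cast_natCast, div_self (hZ _)]
  · rw [gb_eq (by omega), show 2 * (m + 1) - 1 = 2 * m + 1 by omega,
      matchingForm_succ_diagVec_two_mul_add_one, ← Zpm_empty, Int.cast_natCast]
  · obtain ⟨i, rfl⟩ := Nat.exists_eq_add_of_le' hj₂
    rw [Nat.add_sub_cancel, gb_eq (by omega), gb_eq (by omega),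
      show 2 * (m + 1) - (i + 2) = 2 * m - i by omega, matchingForm_succ_diagVec (by omega),
      div_mul_eq_mul_div, mul_add, mul_sub, mul_div_cancel₀ _ (hZ m), mul_sum, mul_one,
      ← Zpm_empty]
    push_cast
    congr 2
    refine sum_congr rfl fun r hr => ?_
    rw [ghat_eq (by rw [mem_range] at hr; omega) (by omega), mul_left_comm,
      mul_div_cancel₀ _ (hZ m)]
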